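/- For all integers c ≥ 2, k ≥ 3, the inequality ((c+2)/(2k+c))·binom(k+c, c+1) > ((c+2)(c+3)(3c+4)/((k−1)(8ck+12k+5c²+7c)))·binom(k+c, c+2) holds; equivalently, assuming both ((c+2)/(2k+c))·binom(k+c, c+1) ≤ d and d ≤ ((c+2)(c+3)(3c+4)/((k−1)(8ck+12k+5c²+7c)))·binom(k+c, c+2) for some real d leads to 2c(c+1)(c+k+1) ≤ 0, which is impossible. -/

import Mathlib

/-! Since `(c + 2) * binom(k + c, c + 2) = (k - 1) * binom(k + c, c + 1)`, both bounds are rational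
functions of `c` and `k` times the same binomial coefficient `binom(k + c, c + 1)`. Clearing the
positive denominators of these two functions, the comparison of the bounds is decided by the sign of
`(c + 2) * (8ck + 12k + 5c² + 7c) - (c + 3) * (3c + 4) * (2k + c) = 2c(c + 1)(c + k + 1)`. -/

lemma cast_choose_succ_right_eq {R : Type*} [Ring R] (n m : ℕ) :
    (n.choose (m + 1) : R) * (m + 1) = n.choose m * (n - m) := by
  obtain hmn | hnm := le_or_gt m n
  · exact_mod_cast congrArg (Nat.cast : ℕ → R) (Nat.choose_succ_right_eq n m)
  · simp [Nat.choose_eq_zero_of_lt hnm, Nat.choose_eq_zero_of_lt (hnm.trans m.lt_succ_self)]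

/-- The lower bound for the degree coming from a curve section. -/
def curveDegreeLowerBound (K : Type*) [Field K] (c k : ℕ) : K :=
  ((c : K) + 2) / (2 * k + c) * (k + c).choose (c + 1)

/-- The upper bound for the degree coming from a surface section. At `k = 1` its
coefficient is the junk value of a division by zero. -/
def surfaceDegreeUpperBound (K : Type*) [Field K] (c k : ℕ) : K :=
  ((c : K) + 2) * (c + 3) * (3 * c + 4) /
    ((k - 1) * (8 * c * k + 12 * k + 5 * c ^ 2 + 7 * c)) * (k + c).choose (c + 2)

lemma surfaceDegreeUpperBound_eq_mul_choose {K : Type*} [Field K] {c k : ℕ} (hk : (k : K) ≠ 1) :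
    surfaceDegreeUpperBound K c k =
      ((c : K) + 3) * (3 * c + 4) / (8 * c * k + 12 * k + 5 * c ^ 2 + 7 * c) *
        (k + c).choose (c + 1) := by
  have hchoose : ((k + c).choose (c + 2) : K) * (c + 2) = (k + c).choose (c + 1) * (k - 1) := by
    convert cast_choose_succ_right_eq (R := K) (k + c) (c + 1) using 2 <;> push_cast <;> ring
  rw [eq_div_of_mul_eq (sub_ne_zero.2 hk) hchoose.symm, surfaceDegreeUpperBound, ← div_div]
  ring

section LinearOrderedField

variable {K : Type*} [Field K] [LinearOrder K] [IsStrictOrderedRing K]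

lemma degree_bound_coeff_le_iff {x y : K} (hcurve : 0 < 2 * y + x)
    (hsurface : 0 < 8 * x * y + 12 * y + 5 * x ^ 2 + 7 * x) :
    (x + 2) / (2 * y + x) ≤
        (x + 3) * (3 * x + 4) / (8 * x * y + 12 * y + 5 * x ^ 2 + 7 * x) ↔
      2 * x * (x + 1) * (x + y + 1) ≤ 0 := by
  have hcross : (x + 2) * (8 * x * y + 12 * y + 5 * x ^ 2 + 7 * x) -
      (x + 3) * (3 * x + 4) * (2 * y + x) = 2 * x * (x + 1) * (x + y + 1) := by
    ring
  rw [div_le_div_iff₀ hcurve hsurface, ← sub_nonpos, hcross]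

lemma curveDegreeLowerBound_le_surfaceDegreeUpperBound_iff {c k : ℕ} (hk : 1 < k) :
    curveDegreeLowerBound K c k ≤ surfaceDegreeUpperBound K c k ↔
      2 * (c : K) * (c + 1) * (c + k + 1) ≤ 0 := by
  have : (0 : K) < k := Nat.cast_pos.2 (by lia)
  have hchoose_pos : (0 : K) < (k + c).choose (c + 1) :=
    Nat.cast_pos.2 (Nat.choose_pos (by lia))
  rw [surfaceDegreeUpperBound_eq_mul_choose (Nat.cast_ne_one.2 hk.ne'), curveDegreeLowerBound,
    mul_le_mul_iff_of_pos_right hchoose_pos]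
  exact degree_bound_coeff_le_iff (by positivity) (by positivity)

theorem degree_bounds_incompatible_general {c k : ℕ} (hc : 0 < c) (hk : 1 < k) :
    surfaceDegreeUpperBound K c k < curveDegreeLowerBound K c k ∧
      ∀ d : K, curveDegreeLowerBound K c k ≤ d → d ≤ surfaceDegreeUpperBound K c k →
        2 * (c : K) * (c + 1) * (c + k + 1) ≤ 0 := by
  have hpos : 0 < 2 * (c : K) * (c + 1) * (c + k + 1) := by positivity
  have hiff := curveDegreeLowerBound_le_surfaceDegreeUpperBound_iff (K := K) (c := c) hk
  exact ⟨not_le.1 fun hle => (hiff.1 hle).not_gt hpos,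
    fun _ hcurve hsurface => hiff.1 (hcurve.trans hsurface)⟩

end LinearOrderedField

/-- **Key numerical incompatibility.** For all integers `c ≥ 2`, `k ≥ 3`, the
inequality
`((c+2)/(2k+c))·binom(k+c, c+1)
  > ((c+2)(c+3)(3c+4)/((k−1)(8ck+12k+5c²+7c)))·binom(k+c, c+2)`
holds; equivalently, assuming both
`((c+2)/(2k+c))·binom(k+c, c+1) ≤ d` and
`d ≤ ((c+2)(c+3)(3c+4)/((k−1)(8ck+12k+5c²+7c)))·binom(k+c, c+2)`
for some real `d` leads to `2c(c+1)(c+k+1) ≤ 0`, which is impossible. -/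
theorem degree_bounds_incompatible (c k : ℕ) (hc : 2 ≤ c) (hk : 3 ≤ k) :
    (((c : ℚ) + 2) / (2 * (k : ℚ) + (c : ℚ)) * ((k + c).choose (c + 1) : ℚ) >
      ((c : ℚ) + 2) * ((c : ℚ) + 3) * (3 * (c : ℚ) + 4) /
          (((k : ℚ) - 1) * (8 * (c : ℚ) * (k : ℚ) + 12 * (k : ℚ)
            + 5 * (c : ℚ) ^ 2 + 7 * (c : ℚ))) *
        ((k + c).choose (c + 2) : ℚ)) ∧
    (∀ d : ℚ,
      ((c : ℚ) + 2) / (2 * (k : ℚ) + (c : ℚ)) * ((k + c).choose (c + 1) : ℚ) ≤ d →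
      d ≤ ((c : ℚ) + 2) * ((c : ℚ) + 3) * (3 * (c : ℚ) + 4) /
            (((k : ℚ) - 1) * (8 * (c : ℚ) * (k : ℚ) + 12 * (k : ℚ)
              + 5 * (c : ℚ) ^ 2 + 7 * (c : ℚ))) *
          ((k + c).choose (c + 2) : ℚ) →
      2 * (c : ℚ) * ((c : ℚ) + 1) * ((c : ℚ) + (k : ℚ) + 1) ≤ 0) := by
  exact degree_bounds_incompatible_general (by lia) (by lia)
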